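/- Let d ≥ 2, let Ω₀ ⊆ ℝ^d be a bounded nonempty open set, let V₀ : ℝ^d → ℝ be measurable, bounded and nonnegative, let c > 0, and define the potential V_c : ℝ^d → ℝ by V_c(x) = V₀(x) for x ∈ Ω₀ and V_c(x) = c for x ∉ Ω₀. Then, computing λ, Σ and Λ with the potential indicated in the subscript: (i) Σ(ℝ^d; V_c) = c; (ii) for every k ≥ 1 and every p ∈ [1,∞], Λ_{k,p}(ℝ^d; V_c) ≤ Λ_{k,p}(Ω₀; V₀); and (iii) consequently, if c > Λ_{k,p}(Ω₀; V₀), then the strict threshold inequality holds: Λ_{k,∞}(ℝ^d; V_c) < Σ(ℝ^d; V_c) when p = ∞, and Λ_{k,p}(ℝ^d; V_c)^p < Λ_{k−1,p}(ℝ^d; V_c)^p + Σ(ℝ^d; V_c)^p when 1 ≤ p < ∞. -/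

import Mathlib

/-!
For a test function `u` supported away from `Ω₀` the potential is the constant `c`, so its Rayleigh
quotient is `c + ∫ ‖∇u‖² / ∫ u²` (`RayleighQ_eq_of_const`). This is at least `c`, which bounds
`λ(ℝ^d \ closure Ω₀)` below by `c`; and a bump function spread over a large ball far from
any given bounded set makes the gradient term arbitrarily small (`exists_far_test`), which bounds
`λ(ℝ^d \ K)` above by `c` for every compact `K`. Hence `Σ = c`.

A partition of `Ω₀` is a partition of `ℝ^d`, and on its cells the two potentials give the same
`λ` (`lambdaLow_congr`), so the infimum over `ℝ^d` is the smaller one. Since these are infima in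
`ℝ`, where the infimum of the empty set is `0`, this also uses that `Ω₀` admits `k`-partitions
(`exists_isPartition`). The strict inequalities follow from `Λ_{k-1,p} ≥ 0` and `Σ = c`.
-/

open MeasureTheory Metric Set Filter
open scoped ENNReal Topology

noncomputable section

/-- Euclidean space `ℝ^d`. -/
abbrev Euc (d : ℕ) : Type := EuclideanSpace ℝ (Fin d)

/-- The Rayleigh quotient `R_V(u)` of the Schrödinger operator `-Δ + V`. -/
def RayleighQ (d : ℕ) (V : Euc d → ℝ) (u : Euc d → ℝ) : ℝ :=
  (∫ x, (‖gradient u x‖ ^ 2 + V x * u x ^ 2)) / (∫ x, u x ^ 2)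

/-- `λ(ω)`: bottom of the spectrum of `-Δ + V` with Dirichlet conditions on `ω`,
via the variational characterization over smooth compactly supported test functions
supported in `ω`. -/
def lambdaLow (d : ℕ) (V : Euc d → ℝ) (ω : Set (Euc d)) : ℝ :=
  sInf { r : ℝ | ∃ u : Euc d → ℝ, ContDiff ℝ (⊤ : ℕ∞) u ∧ HasCompactSupport u ∧ u ≠ 0 ∧
    tsupport u ⊆ ω ∧ r = RayleighQ d V u }

/-- The set `{ λ(ω \ K) : K ⊆ ℝ^d compact }` appearing in Persson's characterization
of the bottom of the essential spectrum. -/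
def specSet (d : ℕ) (V : Euc d → ℝ) (ω : Set (Euc d)) : Set ℝ :=
  { r : ℝ | ∃ K : Set (Euc d), IsCompact K ∧ r = lambdaLow d V (ω \ K) }

/-- `Σ(ω) := sup { λ(ω \ K) : K compact } ∈ [0,∞]`, as an extended real number. -/
def SigmaE (d : ℕ) (V : Euc d → ℝ) (ω : Set (Euc d)) : ℝ≥0∞ :=
  ⨆ K : { K : Set (Euc d) // IsCompact K }, ENNReal.ofReal (lambdaLow d V (ω \ K.1))

/-- `Σ(ω)` as a real number (meaningful when `specSet` is bounded above,
i.e. when `Σ(ω) < ∞`). -/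
def SigmaR (d : ℕ) (V : Euc d → ℝ) (ω : Set (Euc d)) : ℝ :=
  sSup (specSet d V ω)

/-- Open annulus `A_{r,R}(0) = { x : r < |x| < R }`. -/
def annulusO (d : ℕ) (r R : ℝ) : Set (Euc d) := { x : Euc d | r < ‖x‖ ∧ ‖x‖ < R }

/-- A `k`-partition of `Ω`: a `k`-tuple of pairwise disjoint nonempty open subsets of `Ω`. -/
def IsPartition (d : ℕ) (Ω : Set (Euc d)) {k : ℕ} (ω : Fin k → Set (Euc d)) : Prop :=
  (∀ i, IsOpen (ω i)) ∧ (∀ i, (ω i).Nonempty) ∧ (∀ i, ω i ⊆ Ω) ∧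
    ∀ i j, i ≠ j → Disjoint (ω i) (ω j)

/-- `Λ_{k,p}(Ω) := inf (∑ i λ(ωᵢ)^p)^(1/p)` over all `k`-partitions of `Ω`, `1 ≤ p < ∞`. -/
def LamP (d : ℕ) (V : Euc d → ℝ) (Ω : Set (Euc d)) (k : ℕ) (p : ℝ) : ℝ :=
  sInf { r : ℝ | ∃ ω : Fin k → Set (Euc d), IsPartition d Ω ω ∧
    r = (∑ i, lambdaLow d V (ω i) ^ p) ^ (1 / p) }

/-- `Λ_{k,∞}(Ω) := inf max_i λ(ωᵢ)` over all `k`-partitions of `Ω`. -/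
def LamInf (d : ℕ) (V : Euc d → ℝ) (Ω : Set (Euc d)) (k : ℕ) : ℝ :=
  sInf { r : ℝ | ∃ ω : Fin k → Set (Euc d), IsPartition d Ω ω ∧
    r = ⨆ i, lambdaLow d V (ω i) }

/-- Threshold value `T_{k,p}(Ω) := (Λ_{k-1,p}(Ω)^p + Σ(Ω)^p)^(1/p)` for `1 ≤ p < ∞`. -/
def ThreshT (d : ℕ) (V : Euc d → ℝ) (Ω : Set (Euc d)) (k : ℕ) (p : ℝ) : ℝ :=
  (LamP d V Ω (k - 1) p ^ p + SigmaR d V Ω ^ p) ^ (1 / p)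

lemma norm_gradient_eq {d : ℕ} (u : Euc d → ℝ) (x : Euc d) :
    ‖gradient u x‖ = ‖fderiv ℝ u x‖ := by
  simp [gradient]

lemma RayleighQ_nonneg {d : ℕ} {V : Euc d → ℝ} (hV : ∀ x, 0 ≤ V x) (u : Euc d → ℝ) :
    0 ≤ RayleighQ d V u := by
  unfold RayleighQ
  refine div_nonneg (integral_nonneg fun x => ?_) (integral_nonneg fun x => sq_nonneg _)
  have := mul_nonneg (hV x) (sq_nonneg (u x))
  show 0 ≤ _ + _
  positivity

lemma lambdaLow_nonneg {d : ℕ} {V : Euc d → ℝ} (hV : ∀ x, 0 ≤ V x) (ω : Set (Euc d)) :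
    0 ≤ lambdaLow d V ω := by
  refine Real.sInf_nonneg ?_
  rintro r ⟨u, -, -, -, -, rfl⟩
  exact RayleighQ_nonneg hV u

/-- The Rayleigh quotient only sees the values of the potential on the support. -/
lemma RayleighQ_congr {d : ℕ} {V W : Euc d → ℝ} {u : Euc d → ℝ} {ω : Set (Euc d)}
    (h : ∀ x ∈ ω, V x = W x) (hu : tsupport u ⊆ ω) : RayleighQ d V u = RayleighQ d W u := by
  unfold RayleighQ
  congr 2
  ext x
  by_cases hx : x ∈ tsupport u
  · rw [h x (hu hx)]
  · simp [image_eq_zero_of_notMem_tsupport hx]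

lemma lambdaLow_congr {d : ℕ} {V W : Euc d → ℝ} {ω : Set (Euc d)}
    (h : ∀ x ∈ ω, V x = W x) : lambdaLow d V ω = lambdaLow d W ω := by
  unfold lambdaLow
  congr 1
  ext r
  refine exists_congr fun u => ?_
  constructor
  · rintro ⟨h1, h2, h3, h4, h5⟩
    exact ⟨h1, h2, h3, h4, h5.trans (RayleighQ_congr h h4)⟩
  · rintro ⟨h1, h2, h3, h4, h5⟩
    exact ⟨h1, h2, h3, h4, h5.trans (RayleighQ_congr h h4).symm⟩

lemma integral_sq_pos {d : ℕ} {u : Euc d → ℝ} (hu : Continuous u) (hc : HasCompactSupport u)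
    (h0 : u ≠ 0) : 0 < ∫ x, u x ^ 2 := by
  obtain ⟨x, hx⟩ := Function.ne_iff.1 h0
  refine (hu.pow 2).integral_pos_of_hasCompactSupport_nonneg_nonzero (x := x) ?_
    (fun x => sq_nonneg _) (pow_ne_zero 2 hx)
  exact hc.comp_left (g := fun y : ℝ => y ^ 2) (by simp)

/-- A potential equal to a constant `c` on the support shifts the Rayleigh quotient by `c`. -/
lemma RayleighQ_eq_of_const {d : ℕ} {V : Euc d → ℝ} {u : Euc d → ℝ} {c : ℝ} {ω : Set (Euc d)}
    (hu : ContDiff ℝ (⊤ : ℕ∞) u) (hcs : HasCompactSupport u) (h0 : u ≠ 0)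
    (hω : tsupport u ⊆ ω) (hV : ∀ x ∈ ω, V x = c) :
    RayleighQ d V u = (∫ x, ‖fderiv ℝ u x‖ ^ 2) / (∫ x, u x ^ 2) + c := by
  have hpos := integral_sq_pos hu.continuous hcs h0
  rw [RayleighQ_congr (W := fun _ => c) hV hω]
  unfold RayleighQ
  have hi1 : Integrable (fun x => ‖fderiv ℝ u x‖ ^ 2) := by
    have h1 : Continuous (fun x => fderiv ℝ u x) := hu.continuous_fderiv (by simp)
    have h2 : HasCompactSupport (fun x => ‖fderiv ℝ u x‖ ^ 2) :=
      (hcs.fderiv ℝ).mono fun x hx h => hx (by simp [h])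
    exact (h1.norm.pow 2).integrable_of_hasCompactSupport h2
  have hi2 : Integrable (fun x => u x ^ 2) := by
    have h2 : HasCompactSupport (fun x => u x ^ 2) := hcs.mono fun x hx h => hx (by simp [h])
    exact (hu.continuous.pow 2).integrable_of_hasCompactSupport h2
  have hsum : ∫ x, (‖gradient u x‖ ^ 2 + c * u x ^ 2)
      = (∫ x, ‖fderiv ℝ u x‖ ^ 2) + c * ∫ x, u x ^ 2 := by
    simp only [norm_gradient_eq]
    rw [integral_add hi1 (hi2.const_mul c), integral_const_mul]
  rw [hsum, add_div, mul_div_cancel_right₀ _ hpos.ne']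

lemma integral_comp_rescale {d : ℕ} (g : Euc d → ℝ) (r : ℝ) (x₀ : Euc d) :
    ∫ x, g (r • (x - x₀)) = |(r ^ Module.finrank ℝ (Euc d))⁻¹| * ∫ x, g x := by
  rw [integral_sub_right_eq_self (fun x => g (r • x)) x₀, Measure.integral_comp_smul, smul_eq_mul]

/-- The functions `x ↦ φ (r • (x - x₀))`, for a fixed bump function `φ`, small `r > 0`, and `x₀`
far from the bounded set `K`, have small Dirichlet energy and avoid `K`. -/
lemma exists_far_test {d : ℕ} (hd : 2 ≤ d) {K : Set (Euc d)} (hK : Bornology.IsBounded K)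
    {ε : ℝ} (hε : 0 < ε) :
    ∃ u : Euc d → ℝ, ContDiff ℝ (⊤ : ℕ∞) u ∧ HasCompactSupport u ∧ u ≠ 0 ∧ tsupport u ⊆ Kᶜ ∧
      (∫ x, ‖fderiv ℝ u x‖ ^ 2) / (∫ x, u x ^ 2) < ε := by
  have : Nonempty (Fin d) := ⟨⟨0, by omega⟩⟩
  let φ : ContDiffBump (0 : Euc d) := ⟨1, 2, one_pos, one_lt_two⟩
  have hφ : ContDiff ℝ (⊤ : ℕ∞) φ := φ.contDiff
  have hφ1 : φ 0 = 1 := φ.one_of_mem_closedBall (by simp [φ])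
  have hB : 0 < ∫ x, φ x ^ 2 :=
    integral_sq_pos hφ.continuous φ.hasCompactSupport (fun h => by simp [h] at hφ1)
  set A := ∫ x, ‖fderiv ℝ φ x‖ ^ 2 with hA
  set B := ∫ x, φ x ^ 2 with hBdef
  -- By scaling, the quotient for parameter `r` is `r ^ 2 * (A / B)`.
  obtain ⟨r, hr, hrε⟩ : ∃ r : ℝ, 0 < r ∧ r ^ 2 * (A / B) < ε := by
    have ht : Tendsto (fun r : ℝ => r ^ 2 * (A / B)) (𝓝[>] 0) (𝓝 0) := by
      have : Continuous (fun r : ℝ => r ^ 2 * (A / B)) := by fun_prop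
      simpa using (this.tendsto 0).mono_left nhdsWithin_le_nhds
    obtain ⟨r, h1, h2⟩ := ((ht.eventually (gt_mem_nhds hε)).and self_mem_nhdsWithin).exists
    exact ⟨r, h2, h1⟩
  obtain ⟨M, hM⟩ := hK.subset_closedBall (0 : Euc d)
  obtain ⟨x₀, hx₀⟩ := NormedSpace.exists_lt_norm ℝ (Euc d) (M + 2 / r)
  set u : Euc d → ℝ := fun x => φ (r • (x - x₀)) with hu
  have hsupp : tsupport u ⊆ closedBall x₀ (2 / r) := by
    refine closure_minimal (fun x hx => ?_) isClosed_closedBall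
    have h1 : r • (x - x₀) ∈ Function.support φ := hx
    rw [φ.support_eq, mem_ball_zero_iff, norm_smul, Real.norm_of_nonneg hr.le] at h1
    rw [mem_closedBall_iff_norm, le_div_iff₀ hr, mul_comm]
    exact h1.le
  have hud : ContDiff ℝ (⊤ : ℕ∞) u := by
    have : ContDiff ℝ (⊤ : ℕ∞) (fun x : Euc d => r • (x - x₀)) := by fun_prop
    exact hφ.comp this
  have hfd : ∀ x, ‖fderiv ℝ u x‖ ^ 2 = r ^ 2 * ‖fderiv ℝ φ (r • (x - x₀))‖ ^ 2 := by
    intro x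
    have h1 : HasFDerivAt (fun x : Euc d => r • (x - x₀))
        (r • ContinuousLinearMap.id ℝ (Euc d)) x :=
      ((hasFDerivAt_id x).sub_const x₀).const_smul r
    have h2 := ((hφ.differentiable (by simp)) (r • (x - x₀))).hasFDerivAt.comp x h1
    rw [show fderiv ℝ u x = _ from h2.fderiv, ContinuousLinearMap.comp_smul,
      ContinuousLinearMap.comp_id, norm_smul, mul_pow, Real.norm_of_nonneg hr.le]
  refine ⟨u, hud, HasCompactSupport.of_support_subset_isCompact (isCompact_closedBall x₀ (2 / r))
    ((subset_tsupport u).trans hsupp), fun h => ?_, fun x hx hxK => ?_, ?_⟩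
  · have : u x₀ = 1 := by simp [hu, hφ1]
    simp [h] at this
  · have h1 := mem_closedBall_zero_iff.1 (hM hxK)
    have h2 := mem_closedBall_iff_norm'.1 (hsupp hx)
    have h3 := norm_le_norm_sub_add x₀ x
    linarith
  · simp_rw [hfd]
    rw [integral_const_mul, integral_comp_rescale (fun y => ‖fderiv ℝ φ y‖ ^ 2) r x₀,
      integral_comp_rescale (fun y => φ y ^ 2) r x₀, ← hA, ← hBdef]
    have hκ : |(r ^ Module.finrank ℝ (Euc d))⁻¹| ≠ 0 := by positivity
    calc _ = r ^ 2 * (A / B) := by field_simp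
      _ < ε := hrε

/-- A nonempty open set of `ℝ^d` is infinite, and finitely many of its points can be separated by
disjoint open sets. -/
lemma exists_isPartition {d : ℕ} (hd : 2 ≤ d) {Ω : Set (Euc d)} (hΩ : IsOpen Ω)
    (hne : Ω.Nonempty) (k : ℕ) : ∃ ω : Fin k → Set (Euc d), IsPartition d Ω ω := by
  have : Nonempty (Fin d) := ⟨⟨0, by omega⟩⟩
  obtain ⟨x, hx⟩ := hne
  have hinf : Ω.Infinite := infinite_of_mem_nhds x (hΩ.mem_nhds hx)
  obtain ⟨f⟩ : Nonempty (Fin k ↪ Ω) := by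
    have := hinf.to_subtype
    exact ⟨Fin.valEmbedding.trans (Infinite.natEmbedding Ω)⟩
  obtain ⟨U, hU, hd⟩ := (Set.finite_range fun i => (f i : Euc d)).t2_separation
  refine ⟨fun i => U (f i) ∩ Ω, fun i => (hU _).2.inter hΩ, fun i => ⟨f i, (hU _).1, (f i).2⟩,
    fun i => inter_subset_right, fun i j hij => ?_⟩
  refine (hd ⟨i, rfl⟩ ⟨j, rfl⟩ fun h => hij (f.injective (Subtype.ext h))).mono
    inter_subset_left inter_subset_left

lemma SigmaR_eq {d : ℕ} (hd : 2 ≤ d) {Ω₀ : Set (Euc d)} (hbdd : Bornology.IsBounded Ω₀)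
    {V : Euc d → ℝ} {c : ℝ} (hV : ∀ x, 0 ≤ V x) (hVc : ∀ x ∉ Ω₀, V x = c) :
    SigmaR d V univ = c := by
  have hle : ∀ r ∈ specSet d V univ, r ≤ c := by
    rintro r ⟨K, hK, rfl⟩
    refine le_of_forall_pos_le_add fun ε hε => ?_
    obtain ⟨u, h1, h2, h3, h4, h5⟩ := exists_far_test hd (hK.isBounded.union hbdd) hε
    have hR := RayleighQ_eq_of_const h1 h2 h3 h4 (V := V) (c := c)
      fun x hx => hVc x fun h => hx (Or.inr h)
    have hle : lambdaLow d V (univ \ K) ≤ RayleighQ d V u := by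
      refine csInf_le ⟨0, ?_⟩
        ⟨u, h1, h2, h3, fun x hx => ⟨mem_univ x, fun h => h4 hx (Or.inl h)⟩, rfl⟩
      rintro r ⟨v, -, -, -, -, rfl⟩
      exact RayleighQ_nonneg hV v
    linarith
  have hmem : lambdaLow d V (univ \ closure Ω₀) ∈ specSet d V univ :=
    ⟨closure Ω₀, hbdd.isCompact_closure, rfl⟩
  refine le_antisymm (csSup_le ⟨_, hmem⟩ hle) (le_trans ?_ (le_csSup ⟨c, hle⟩ hmem))
  refine le_csInf ?_ ?_
  · obtain ⟨u, h1, h2, h3, h4, -⟩ := exists_far_test hd hbdd.closure one_pos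
    exact ⟨_, u, h1, h2, h3, fun x hx => ⟨mem_univ x, h4 hx⟩, rfl⟩
  · rintro r ⟨u, h1, h2, h3, h4, rfl⟩
    rw [RayleighQ_eq_of_const h1 h2 h3 h4 fun x hx => hVc x fun h => hx.2 (subset_closure h)]
    have : 0 ≤ (∫ x, ‖fderiv ℝ u x‖ ^ 2) / (∫ x, u x ^ 2) :=
      div_nonneg (integral_nonneg fun x => sq_nonneg _) (integral_nonneg fun x => sq_nonneg _)
    linarith

lemma LamP_nonneg {d : ℕ} {V : Euc d → ℝ} (hV : ∀ x, 0 ≤ V x) (Ω : Set (Euc d)) (k : ℕ)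
    (p : ℝ) : 0 ≤ LamP d V Ω k p := by
  refine Real.sInf_nonneg ?_
  rintro r ⟨ω, -, rfl⟩
  exact Real.rpow_nonneg
    (Finset.sum_nonneg fun i _ => Real.rpow_nonneg (lambdaLow_nonneg hV _) _) _

lemma LamP_le {d : ℕ} (hd : 2 ≤ d) {Ω : Set (Euc d)} (hΩ : IsOpen Ω) (hne : Ω.Nonempty)
    {V W : Euc d → ℝ} (hW : ∀ x, 0 ≤ W x) (h : ∀ x ∈ Ω, W x = V x) (k : ℕ) (p : ℝ) :
    LamP d W univ k p ≤ LamP d V Ω k p := by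
  obtain ⟨ω, hω⟩ := exists_isPartition hd hΩ hne k
  refine csInf_le_csInf ⟨0, ?_⟩ ⟨_, ω, hω, rfl⟩ ?_
  · rintro r ⟨ω, -, rfl⟩
    exact Real.rpow_nonneg
      (Finset.sum_nonneg fun i _ => Real.rpow_nonneg (lambdaLow_nonneg hW _) _) _
  · rintro r ⟨ω, hω, rfl⟩
    refine ⟨ω, ⟨hω.1, hω.2.1, fun i => subset_univ _, hω.2.2.2⟩, ?_⟩
    simp_rw [fun i => lambdaLow_congr fun x hx => h x (hω.2.2.1 i hx)]

lemma LamInf_le {d : ℕ} (hd : 2 ≤ d) {Ω : Set (Euc d)} (hΩ : IsOpen Ω) (hne : Ω.Nonempty)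
    {V W : Euc d → ℝ} (hW : ∀ x, 0 ≤ W x) (h : ∀ x ∈ Ω, W x = V x) (k : ℕ) :
    LamInf d W univ k ≤ LamInf d V Ω k := by
  obtain ⟨ω, hω⟩ := exists_isPartition hd hΩ hne k
  refine csInf_le_csInf ⟨0, ?_⟩ ⟨_, ω, hω, rfl⟩ ?_
  · rintro r ⟨ω, -, rfl⟩
    exact Real.iSup_nonneg fun i => lambdaLow_nonneg hW _
  · rintro r ⟨ω, hω, rfl⟩
    refine ⟨ω, ⟨hω.1, hω.2.1, fun i => subset_univ _, hω.2.2.2⟩, ?_⟩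
    simp_rw [fun i => lambdaLow_congr fun x hx => h x (hω.2.2.1 i hx)]

/-- for the potential `V_c` equal to a bounded potential `V₀` on a bounded
open set `Ω₀` and to `c` outside: (i) `Σ(ℝ^d; V_c) = c`; (ii) the optimal partition
energies of `(ℝ^d, V_c)` are bounded by those of `(Ω₀, V₀)` for every `k ≥ 1` and every
`p ∈ [1,∞]`; (iii) if `c > Λ_{k,p}(Ω₀; V₀)` then the strict threshold inequality holds. -/
theorem statement_19 (d : ℕ) (hd : 2 ≤ d)
    (Ω₀ : Set (Euc d)) (hΩ₀ : IsOpen Ω₀) (hne : Ω₀.Nonempty)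
    (hbdd : Bornology.IsBounded Ω₀)
    (V₀ : Euc d → ℝ) (hV₀meas : Measurable V₀)
    (hV₀bdd : ∃ C : ℝ, ∀ x, V₀ x ≤ C) (hV₀pos : ∀ x, 0 ≤ V₀ x)
    (c : ℝ) (hc : 0 < c)
    (Vc : Euc d → ℝ)
    (hVc₁ : ∀ x ∈ Ω₀, Vc x = V₀ x) (hVc₂ : ∀ x ∉ Ω₀, Vc x = c) :
    SigmaR d Vc (univ : Set (Euc d)) = c ∧
    ∀ k : ℕ, 1 ≤ k →
      (∀ p : ℝ, 1 ≤ p →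
          LamP d Vc (univ : Set (Euc d)) k p ≤ LamP d V₀ Ω₀ k p) ∧
      LamInf d Vc (univ : Set (Euc d)) k ≤ LamInf d V₀ Ω₀ k ∧
      (LamInf d V₀ Ω₀ k < c →
          LamInf d Vc (univ : Set (Euc d)) k < SigmaR d Vc (univ : Set (Euc d))) ∧
      (∀ p : ℝ, 1 ≤ p → LamP d V₀ Ω₀ k p < c →
          LamP d Vc (univ : Set (Euc d)) k p ^ p
            < LamP d Vc (univ : Set (Euc d)) (k - 1) p ^ p
              + SigmaR d Vc (univ : Set (Euc d)) ^ p) := by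
  have hV : ∀ x, 0 ≤ Vc x := by
    intro x
    by_cases hx : x ∈ Ω₀
    · rw [hVc₁ x hx]; exact hV₀pos x
    · rw [hVc₂ x hx]; exact hc.le
  have hS : SigmaR d Vc univ = c := SigmaR_eq hd hbdd hV hVc₂
  refine ⟨hS, fun k _ => ⟨fun p _ => LamP_le hd hΩ₀ hne hV hVc₁ k p,
    LamInf_le hd hΩ₀ hne hV hVc₁ k, fun h => ?_, fun p hp h => ?_⟩⟩
  · rw [hS]
    exact (LamInf_le hd hΩ₀ hne hV hVc₁ k).trans_lt h
  · rw [hS]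
    have h1 : LamP d Vc univ k p ^ p < c ^ p :=
      Real.rpow_lt_rpow (LamP_nonneg hV _ _ _)
        ((LamP_le hd hΩ₀ hne hV hVc₁ k p).trans_lt h) (by linarith)
    have h2 : 0 ≤ LamP d Vc univ (k - 1) p ^ p :=
      Real.rpow_nonneg (LamP_nonneg hV _ _ _) _
    linarith
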